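/- Let s ∈ (0,1), γ ∈ ℝ with γ + 2s > 0, c = max{0, −γ/2}, K₀ ≥ 1, and let δ₁, δ₂ satisfy 0 < δ₁ ≤ 1, δ₂ > 0, δ₁ ≤ δ₂, δ₁/δ₂ + c ≤ s, and (δ₁−1)/δ₂ ≤ γ + 2s − 2. Let χ₀ : ℝ → ℝ be differentiable with 0 ≤ χ₀ ≤ 1, χ₀(z) = 1 for |z| ≤ 1/2, χ₀(z) = 0 for |z| ≥ 1, |χ₀′| ≤ C₀, and χ₀′(z) = 0 whenever |z| < 1/2 or |z| > 1. For v, y, η ∈ ℝ^d set A = 1 + |v|² + |η|² + |v∧η|², B = 1 + |v|² + |y|² + |v∧y|², χ = χ₀(A/B^{δ₂}), I₁ = B^{δ₁}(χ − 1), I₂ = −(1+|v|²)B^{δ₁−1}χ, and I₃ = 2B^{δ₁−1−δ₂}(⟨y,η⟩ + (v∧y)·(v∧η))² χ₀′(A/B^{δ₂}). Then with C = 2^{δ₁/δ₂} + 1 + 2C₀, for all v, y, η ∈ ℝ^d: |I₁| + |I₂| + |I₃| ≤ C · a(v,η), where a(v,η) = ⟨v⟩^γ A^s + K₀⟨v⟩^{γ+2s}.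 -/

import Mathlib

/-!
Write `w = 1 + |v|² = ⟨v⟩²`, so that `1 ≤ w ≤ A` and `1 ≤ w ≤ B` by Cauchy–Schwarz, and
`a = w^(γ/2) A^s + K₀ w^(γ/2+s)`. Each error term is supported where `A` and `B^δ₂` are comparable
from one side, and this lets `B` be traded for a power of `A`.

* `I₁` lives on `B^δ₂ < 2A`, hence `B^δ₁ ≤ 2^(δ₁/δ₂) A^(δ₁/δ₂)`.
* `I₂` lives on `A ≤ B^δ₂`, hence `w B^(δ₁-1) ≤ w A^((δ₁-1)/δ₂) ≤ w^(1+(δ₁-1)/δ₂) ≤ w^(γ/2+s)`.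
* `I₃` lives on `A ≤ B^δ₂`. The form `⟨y,η⟩ + (v∧y)·(v∧η)` is positive semidefinite, so its square
  is at most `AB` (`wedge_form_sq_le`), and `|I₃| ≤ 2C₀ B^(δ₁-δ₂) A ≤ 2C₀ A^(δ₁/δ₂)`.

The powers `A^(δ₁/δ₂)` are absorbed by the first summand of `a`: since `δ₁/δ₂ + c ≤ s` and
`c ≥ -γ/2`, one has `A^(s-δ₁/δ₂) ≥ A^c ≥ w^c ≥ w^(-γ/2)` (`rpow_le_weight`).
-/

open scoped RealInnerProductSpace

lemma gram_nonneg {d : ℕ} (v x : EuclideanSpace ℝ (Fin d)) :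
    0 ≤ ‖v‖ ^ 2 * ‖x‖ ^ 2 - ⟪v, x⟫ ^ 2 := by
  have h := abs_real_inner_le_norm v x
  have h2 : ⟪v, x⟫ ^ 2 ≤ (‖v‖ * ‖x‖) ^ 2 := by
    rw [← sq_abs]
    exact pow_le_pow_left₀ (abs_nonneg _) h 2
  nlinarith

/-- Cauchy–Schwarz for the positive semidefinite form
`(y, η) ↦ ⟨y,η⟩ + (v∧y)·(v∧η)`, via the discriminant of `t ↦ Q(tη + y)`. -/
lemma wedge_form_sq_le {d : ℕ} (v y η : EuclideanSpace ℝ (Fin d)) :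
    (⟪y, η⟫ + (‖v‖ ^ 2 * ⟪y, η⟫ - ⟪v, y⟫ * ⟪v, η⟫)) ^ 2 ≤
      (‖y‖ ^ 2 + (‖v‖ ^ 2 * ‖y‖ ^ 2 - ⟪v, y⟫ ^ 2)) *
      (‖η‖ ^ 2 + (‖v‖ ^ 2 * ‖η‖ ^ 2 - ⟪v, η⟫ ^ 2)) := by
  have key : ∀ t : ℝ,
      0 ≤ (‖η‖ ^ 2 + (‖v‖ ^ 2 * ‖η‖ ^ 2 - ⟪v, η⟫ ^ 2)) * (t * t) +
        (2 * (⟪y, η⟫ + (‖v‖ ^ 2 * ⟪y, η⟫ - ⟪v, y⟫ * ⟪v, η⟫))) * t +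
        (‖y‖ ^ 2 + (‖v‖ ^ 2 * ‖y‖ ^ 2 - ⟪v, y⟫ ^ 2)) := by
    intro t
    have h := gram_nonneg v (t • η + y)
    have h0 := sq_nonneg ‖t • η + y‖
    have e1 : ‖t • η + y‖ ^ 2 = t ^ 2 * ‖η‖ ^ 2 + 2 * t * ⟪y, η⟫ + ‖y‖ ^ 2 := by
      rw [norm_add_sq_real, norm_smul, real_inner_smul_left, real_inner_comm, mul_pow,
        Real.norm_eq_abs, sq_abs]
      ring
    have e2 : ⟪v, t • η + y⟫ = t * ⟪v, η⟫ + ⟪v, y⟫ := by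
      rw [inner_add_right, real_inner_smul_right]
    rw [e1, e2] at h
    rw [e1] at h0
    nlinarith
  have hd := discrim_le_zero key
  unfold discrim at hd
  nlinarith

/-- If `A ≤ B^δ` then nonpositive powers of `B` are controlled by powers of `A`. -/
lemma rpow_le_of_le_rpow {A B δ e : ℝ} (hA : 0 < A) (hB : 0 < B) (hδ : 0 < δ)
    (he : e ≤ 0) (h : A ≤ B ^ δ) : B ^ e ≤ A ^ (e / δ) := by
  have h1 : (B ^ δ) ^ (e / δ) ≤ A ^ (e / δ) :=
    Real.rpow_le_rpow_of_nonpos hA h (div_nonpos_of_nonpos_of_nonneg he hδ.le)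
  rwa [← Real.rpow_mul hB.le, mul_div_cancel₀ _ hδ.ne'] at h1

lemma rpow_le_weight {w A p s γ c : ℝ} (hw : 1 ≤ w) (hwA : w ≤ A) (hc0 : 0 ≤ c)
    (hcγ : -γ / 2 ≤ c) (hps : p + c ≤ s) : A ^ p ≤ w ^ (γ / 2) * A ^ s := by
  have hw0 : 0 < w := by linarith
  have hA0 : 0 < A := by linarith
  have h1 : 1 ≤ w ^ (γ / 2) * A ^ c :=
    calc (1 : ℝ) ≤ w ^ (γ / 2 + c) := Real.one_le_rpow hw (by linarith)
      _ = w ^ (γ / 2) * w ^ c := Real.rpow_add hw0 _ _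
      _ ≤ w ^ (γ / 2) * A ^ c := by gcongr
  calc A ^ p = 1 * A ^ p := (one_mul _).symm
    _ ≤ (w ^ (γ / 2) * A ^ c) * A ^ p := by gcongr
    _ = w ^ (γ / 2) * A ^ (p + c) := by rw [Real.rpow_add hA0]; ring
    _ ≤ w ^ (γ / 2) * A ^ s := by
      gcongr
      linarith

/-- The error terms `I₁, I₂, I₃` of the Poisson bracket decomposition of the
regularizing symbol `θ` are bounded by the weight
`a(v,η) = ⟨v⟩^γ A^s + K₀⟨v⟩^{γ+2s}`: with `C = 2^{δ₁/δ₂} + 1 + 2C₀`,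
`|I₁| + |I₂| + |I₃| ≤ C·a(v,η)` for all `v, y, η ∈ ℝ^d`. -/
theorem stmt_17 (s γ K₀ c δ₁ δ₂ C₀ : ℝ)
    (hs0 : 0 < s) (hs1 : s < 1) (hγ : 0 < γ + 2 * s)
    (hc : c = max 0 (-γ / 2)) (hK₀ : 1 ≤ K₀)
    (hδ₁0 : 0 < δ₁) (hδ₁1 : δ₁ ≤ 1) (hδ₂ : 0 < δ₂) (hδ₁₂ : δ₁ ≤ δ₂)
    (hδs : δ₁ / δ₂ + c ≤ s) (hδγ : (δ₁ - 1) / δ₂ ≤ γ + 2 * s - 2)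
    (χ₀ : ℝ → ℝ) (hdiff : Differentiable ℝ χ₀)
    (hrange : ∀ z, 0 ≤ χ₀ z ∧ χ₀ z ≤ 1)
    (hone : ∀ z, |z| ≤ 1 / 2 → χ₀ z = 1)
    (hzero : ∀ z, 1 ≤ |z| → χ₀ z = 0)
    (hC₀ : ∀ z, |deriv χ₀ z| ≤ C₀)
    (hderiv0 : ∀ z, |z| < 1 / 2 ∨ 1 < |z| → deriv χ₀ z = 0)
    (d : ℕ) (v y η : EuclideanSpace ℝ (Fin d))
    (A B χv I₁ I₂ I₃ : ℝ)
    (hA : A = 1 + ‖v‖ ^ 2 + ‖η‖ ^ 2 + (‖v‖ ^ 2 * ‖η‖ ^ 2 - ⟪v, η⟫ ^ 2))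
    (hB : B = 1 + ‖v‖ ^ 2 + ‖y‖ ^ 2 + (‖v‖ ^ 2 * ‖y‖ ^ 2 - ⟪v, y⟫ ^ 2))
    (hχv : χv = χ₀ (A / B ^ δ₂))
    (hI₁ : I₁ = B ^ δ₁ * (χv - 1))
    (hI₂ : I₂ = -((1 + ‖v‖ ^ 2) * B ^ (δ₁ - 1) * χv))
    (hI₃ : I₃ = 2 * B ^ (δ₁ - 1 - δ₂) *
      (⟪y, η⟫ + (‖v‖ ^ 2 * ⟪y, η⟫ - ⟪v, y⟫ * ⟪v, η⟫)) ^ 2 *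
      deriv χ₀ (A / B ^ δ₂)) :
    |I₁| + |I₂| + |I₃| ≤
      (2 ^ (δ₁ / δ₂) + 1 + 2 * C₀) *
        (Real.sqrt (1 + ‖v‖ ^ 2) ^ γ * A ^ s +
          K₀ * Real.sqrt (1 + ‖v‖ ^ 2) ^ (γ + 2 * s)) := by
  set w : ℝ := 1 + ‖v‖ ^ 2 with hw
  have hw1 : 1 ≤ w := by have := sq_nonneg ‖v‖; linarith
  have hw0 : 0 < w := by linarith
  have gη := gram_nonneg v η
  have gy := gram_nonneg v y
  have hwA : w ≤ A := by have := sq_nonneg ‖η‖; linarith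
  have hwB : w ≤ B := by have := sq_nonneg ‖y‖; linarith
  have hA0 : 0 < A := by linarith
  have hB0 : 0 < B := by linarith
  have hBδ : 0 < B ^ δ₂ := Real.rpow_pos_of_pos hB0 _
  have hz : |A / B ^ δ₂| = A / B ^ δ₂ := abs_of_pos (div_pos hA0 hBδ)
  have hC0 : 0 ≤ C₀ := (abs_nonneg _).trans (hC₀ 0)
  have hsqrt : ∀ r : ℝ, Real.sqrt w ^ r = w ^ (r / 2) := by
    intro r
    rw [Real.sqrt_eq_rpow, ← Real.rpow_mul hw0.le]
    congr 1
    ring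
  have hAp : A ^ (δ₁ / δ₂) ≤ w ^ (γ / 2) * A ^ s :=
    rpow_le_weight hw1 hwA (hc ▸ le_max_left _ _) (hc ▸ le_max_right _ _) hδs
  have hχ := hrange (A / B ^ δ₂)
  rw [← hχv] at hχ
  have b1 : |I₁| ≤ 2 ^ (δ₁ / δ₂) * (w ^ (γ / 2) * A ^ s) := by
    rcases le_or_gt (A / B ^ δ₂) (1 / 2) with h | h
    · have : χv = 1 := by rw [hχv]; exact hone _ (by rwa [hz])
      rw [hI₁, this, sub_self, mul_zero, abs_zero]
      positivity
    · have h2 : B ^ δ₂ ≤ 2 * A := by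
        rw [lt_div_iff₀ hBδ] at h
        linarith
      have h3 : B ^ δ₁ ≤ 2 ^ (δ₁ / δ₂) * A ^ (δ₁ / δ₂) := by
        have := Real.rpow_le_rpow hBδ.le h2 (div_pos hδ₁0 hδ₂).le
        rwa [← Real.rpow_mul hB0.le, mul_div_cancel₀ _ hδ₂.ne',
          Real.mul_rpow (by norm_num) hA0.le] at this
      have h4 : |χv - 1| ≤ 1 := by
        rw [abs_le]
        constructor <;> linarith
      calc |I₁| = B ^ δ₁ * |χv - 1| := by
            rw [hI₁, abs_mul, abs_of_pos (Real.rpow_pos_of_pos hB0 _)]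
        _ ≤ B ^ δ₁ * 1 := by gcongr
        _ ≤ 2 ^ (δ₁ / δ₂) * A ^ (δ₁ / δ₂) := by rwa [mul_one]
        _ ≤ _ := by gcongr
  have b2 : |I₂| ≤ w ^ ((γ + 2 * s) / 2) := by
    rcases le_or_gt 1 (A / B ^ δ₂) with h | h
    · have : χv = 0 := by rw [hχv]; exact hzero _ (by rwa [hz])
      rw [hI₂, this, mul_zero, neg_zero, abs_zero]
      positivity
    · have h2 : A ≤ B ^ δ₂ := by
        rw [div_lt_one hBδ] at h
        exact h.le
      have he : (δ₁ - 1) / δ₂ ≤ 0 :=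
        div_nonpos_of_nonpos_of_nonneg (by linarith) hδ₂.le
      calc |I₂| = w * B ^ (δ₁ - 1) * χv := by
            rw [hI₂, abs_neg, abs_of_nonneg]
            have := hχ.1
            positivity
        _ ≤ w * B ^ (δ₁ - 1) * 1 := by
            gcongr
            exact hχ.2
        _ ≤ w * A ^ ((δ₁ - 1) / δ₂) := by
            rw [mul_one]
            gcongr
            exact rpow_le_of_le_rpow hA0 hB0 hδ₂ (by linarith) h2
        _ ≤ w * w ^ ((δ₁ - 1) / δ₂) :=
            mul_le_mul_of_nonneg_left (Real.rpow_le_rpow_of_nonpos hw0 hwA he) hw0.le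
        _ = w ^ (1 + (δ₁ - 1) / δ₂) := by rw [Real.rpow_add hw0, Real.rpow_one]
        _ ≤ _ := by
            apply Real.rpow_le_rpow_of_exponent_le hw1
            -- with `t = (γ + 2s)/2`: `1 + min 0 (2t - 2) ≤ t`, whether `t ≤ 1` or `t ≥ 1`
            rcases le_total (γ + 2 * s) 2 with h | h <;> linarith
  have b3 : |I₃| ≤ 2 * C₀ * (w ^ (γ / 2) * A ^ s) := by
    rcases le_or_gt (A / B ^ δ₂) 1 with h | h
    · have h2 : A ≤ B ^ δ₂ := by rwa [div_le_one hBδ] at h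
      have hQ : (⟪y, η⟫ + (‖v‖ ^ 2 * ⟪y, η⟫ - ⟪v, y⟫ * ⟪v, η⟫)) ^ 2 ≤ B * A := by
        refine (wedge_form_sq_le v y η).trans ?_
        have := sq_nonneg ‖η‖
        have := sq_nonneg ‖y‖
        apply mul_le_mul <;> linarith
      calc |I₃| = 2 * B ^ (δ₁ - 1 - δ₂) *
            (⟪y, η⟫ + (‖v‖ ^ 2 * ⟪y, η⟫ - ⟪v, y⟫ * ⟪v, η⟫)) ^ 2 *
            |deriv χ₀ (A / B ^ δ₂)| := by
            rw [hI₃, abs_mul, abs_of_nonneg]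
            positivity
        _ ≤ 2 * B ^ (δ₁ - 1 - δ₂) * (B * A) * C₀ := by
            gcongr
            exact hC₀ _
        _ = 2 * C₀ * (B ^ (δ₁ - δ₂) * A) := by
            rw [show δ₁ - δ₂ = (δ₁ - 1 - δ₂) + 1 by ring, Real.rpow_add hB0, Real.rpow_one]
            ring
        _ ≤ 2 * C₀ * (A ^ ((δ₁ - δ₂) / δ₂) * A) := by
            gcongr
            exact rpow_le_of_le_rpow hA0 hB0 hδ₂ (by linarith) h2
        _ = 2 * C₀ * A ^ (δ₁ / δ₂) := by
            rw [show δ₁ / δ₂ = (δ₁ - δ₂) / δ₂ + 1 by field_simp; ring, Real.rpow_add hA0,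
              Real.rpow_one]
        _ ≤ _ := by gcongr
    · rw [hI₃, hderiv0 _ (Or.inr (by rwa [hz])), mul_zero, abs_zero]
      positivity
  rw [hsqrt, hsqrt]
  have hX : 0 ≤ w ^ (γ / 2) * A ^ s := by positivity
  have hY : 0 ≤ w ^ ((γ + 2 * s) / 2) := by positivity
  have hKY : w ^ ((γ + 2 * s) / 2) ≤ K₀ * w ^ ((γ + 2 * s) / 2) :=
    le_mul_of_one_le_left hY hK₀
  have hD : (0 : ℝ) ≤ 2 ^ (δ₁ / δ₂) + 2 * C₀ := by positivity
  have hrest := mul_nonneg hD (hY.trans hKY)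
  linarith
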